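/- Every vertex i_ℓ∈dom(C) with i_ℓ≠1 belongs to S_{t_q}^B(C) for some q∈{1,…,r}; consequently the clause C*_0 = {¬p_{1,j_1}}∪⋃_{q′≥1}C_{t_{q′}} is equal to C. -/

import Mathlib

open scoped Classical

/-! ### Clauses and literals -/

abbrev Lit (V : Type) := V × Bool
abbrev Clause (V : Type) := Finset (V × Bool)

/-- Propositional variables for the Stone principle: `p i j` and `r j`. -/
inductive SV where
  | p (i j : ℕ) : SV
  | r (j : ℕ) : SV
deriving DecidableEq

/-- A dag on vertices `1,…,N` with unique sink `1`, in which every non-source vertex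
(the vertices `1,…,n`) has exactly the two predecessors `p1 i` and `p2 i`,
every edge `(i′,i)` satisfies `i′ > i`, and the sources are exactly `n+1,…,N`. -/
structure StoneDag where
  N : ℕ
  n : ℕ
  p1 : ℕ → ℕ
  p2 : ℕ → ℕ
  n_lt_N : n < N
  p1_gt : ∀ i, 1 ≤ i → i ≤ n → i < p1 i
  p2_gt : ∀ i, 1 ≤ i → i ≤ n → i < p2 i
  p1_le : ∀ i, 1 ≤ i → i ≤ n → p1 i ≤ N
  p2_le : ∀ i, 1 ≤ i → i ≤ n → p2 i ≤ N
  p_ne : ∀ i, 1 ≤ i → i ≤ n → p1 i ≠ p2 i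
  unique_sink : ∀ i, 2 ≤ i → i ≤ N → ∃ v, 1 ≤ v ∧ v ≤ n ∧ (p1 v = i ∨ p2 v = i)

/-- The clause set `Stone(G,m)`. -/
def stoneClauses (G : StoneDag) (m : ℕ) : Set (Clause SV) :=
  { C | ∃ i, 1 ≤ i ∧ i ≤ G.N ∧
      C = (Finset.Icc 1 m).image (fun j => ((SV.p i j, true) : Lit SV)) } ∪
  { C | ∃ i j, G.n < i ∧ i ≤ G.N ∧ 1 ≤ j ∧ j ≤ m ∧
      C = {(SV.p i j, false), (SV.r j, true)} } ∪
  { C | ∃ j, 1 ≤ j ∧ j ≤ m ∧ C = {(SV.p 1 j, false), (SV.r j, false)} } ∪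
  { C | ∃ i j j' j'', 1 ≤ i ∧ i ≤ G.n ∧ 1 ≤ j ∧ j ≤ m ∧ 1 ≤ j' ∧ j' ≤ m ∧
      1 ≤ j'' ∧ j'' ≤ m ∧ j ≠ j' ∧ j ≠ j'' ∧
      C = {(SV.p (G.p1 i) j', false), (SV.r j', false),
           (SV.p (G.p2 i) j'', false), (SV.r j'', false),
           (SV.p i j, false), (SV.r j, true)} }

/-! ### Resolution inference rules -/

/-- `(A ∖ {x}) ∪ (B ∖ {¬x})`. -/
def wres {V : Type} [DecidableEq V] (x : V) (A B : Clause V) : Clause V :=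
  A.erase (x, true) ∪ B.erase (x, false)

/-- w-resolution inference. -/
def wstep {V : Type} [DecidableEq V] (x : V) (A B C : Clause V) : Prop :=
  C = wres x A B

/-- ordinary resolution inference. -/
def rstep {V : Type} [DecidableEq V] (x : V) (A B C : Clause V) : Prop :=
  (x, true) ∈ A ∧ (x, false) ∈ B ∧ C = wres x A B

/-- degenerate resolution inference. -/
def dstep {V : Type} [DecidableEq V] (x : V) (A B C : Clause V) : Prop :=
  ((x, true) ∈ A ∧ (x, false) ∈ B ∧ C = wres x A B) ∨
  ((x, true) ∈ A ∧ (x, false) ∉ B ∧ C = B) ∨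
  ((x, true) ∉ A ∧ (x, false) ∈ B ∧ C = A) ∨
  ((x, true) ∉ A ∧ (x, false) ∉ B ∧ (C = A ∨ C = B))

/-! ### Tree-like proofs -/

/-- Binary proof trees: each node is labeled with a clause, internal nodes also
with a resolution variable. -/
inductive PTree (V : Type) [DecidableEq V] where
  | leaf : Clause V → PTree V
  | node : Clause V → V → PTree V → PTree V → PTree V

namespace PTree

variable {V : Type} [DecidableEq V]

/-- The clause labeling the root. -/
def clause : PTree V → Clause V
  | leaf c => c
  | node c _ _ _ => c

/-- Number of nodes. -/
def size : PTree V → ℕ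
  | leaf _ => 1
  | node _ _ t1 t2 => t1.size + t2.size + 1

/-- The set of variables used as resolution variables. -/
def resVars : PTree V → Finset V
  | leaf _ => ∅
  | node _ x t1 t2 => insert x (t1.resVars ∪ t2.resVars)

/-- No variable is used as a resolution variable more than once on any
root-to-leaf path. -/
def regular : PTree V → Prop
  | leaf _ => True
  | node _ x t1 t2 => x ∉ t1.resVars ∧ x ∉ t2.resVars ∧ t1.regular ∧ t2.regular

/-- Every internal node is obtained from its children by the inference `step`. -/
def wf (step : V → Clause V → Clause V → Clause V → Prop) : PTree V → Prop
  | leaf _ => True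
  | node c x t1 t2 => step x t1.clause t2.clause c ∧ t1.wf step ∧ t2.wf step

/-- All clauses occurring in the tree. -/
def clauses : PTree V → Set (Clause V)
  | leaf c => {c}
  | node c _ t1 t2 => t1.clauses ∪ t2.clauses ∪ {c}

/-- Every leaf is labeled by a clause of `Γ` or by a clause occurring strictly
earlier in postorder; `S` is the set of clauses occurring before this subtree. -/
def lemmasOK (Γ : Set (Clause V)) : PTree V → Set (Clause V) → Prop
  | leaf c, S => c ∈ Γ ∨ c ∈ S
  | node _ _ t1 t2, S => t1.lemmasOK Γ S ∧ t2.lemmasOK Γ (S ∪ t1.clauses)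

/-- Every leaf is labeled by a clause of `Γ`. -/
def leavesIn (Γ : Set (Clause V)) : PTree V → Prop
  | leaf c => c ∈ Γ
  | node _ _ t1 t2 => t1.leavesIn Γ ∧ t2.leavesIn Γ

/-- Postorder scan computing, from the set `L` of clauses learned so far
(initially `Γ`), the pair of (i) the set of clauses learned after traversing the
subtree — a clause becomes learned when it is the final clause of an input
subderivation, i.e. a subderivation each of whose inferences has at least one
hypothesis that is already learned — and (ii) whether this subtree is an input
subderivation. -/
def scan : PTree V → Set (Clause V) → Set (Clause V) × Prop
  | leaf _, L => (L, True)
  | node c _ t1 t2, L =>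
      let r1 := t1.scan L
      let r2 := t2.scan r1.1
      let inp : Prop := r1.2 ∧ r2.2 ∧ (t1.clause ∈ r1.1 ∨ t2.clause ∈ r2.1)
      ({ d | d ∈ r2.1 ∨ (inp ∧ d = c) }, inp)

/-- Every leaf is labeled by a learned clause (a clause of the initial set `L`,
or one derived by an input subderivation strictly earlier in postorder). -/
def lemOK : PTree V → Set (Clause V) → Prop
  | leaf c, L => c ∈ L
  | node _ _ t1 t2, L => t1.lemOK L ∧ t2.lemOK (t1.scan L).1

end PTree

/-- regWRTL refutation of `Γ`. -/
def RegWRTLRefutation {V : Type} [DecidableEq V] (Γ : Set (Clause V)) (T : PTree V) : Prop :=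
  T.clause = ∅ ∧ T.wf wstep ∧ T.regular ∧ T.lemmasOK Γ ∅

/-- pool resolution refutation of `Γ`. -/
def PoolRefutation {V : Type} [DecidableEq V] (Γ : Set (Clause V)) (T : PTree V) : Prop :=
  T.clause = ∅ ∧ T.wf dstep ∧ T.regular ∧ T.lemmasOK Γ ∅

/-- regRTL refutation of `Γ`. -/
def RegRTLRefutation {V : Type} [DecidableEq V] (Γ : Set (Clause V)) (T : PTree V) : Prop :=
  T.clause = ∅ ∧ T.wf rstep ∧ T.regular ∧ T.lemmasOK Γ ∅

/-- regRTI refutation of `Γ`: all lemmas are input lemmas. -/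
def RegRTIRefutation {V : Type} [DecidableEq V] (Γ : Set (Clause V)) (T : PTree V) : Prop :=
  T.clause = ∅ ∧ T.wf rstep ∧ T.regular ∧ T.lemOK Γ

/-- regRTI derivation of the clause `D` from `Γ`. -/
def RegRTIDeriv {V : Type} [DecidableEq V] (Γ : Set (Clause V)) (D : Clause V)
    (T : PTree V) : Prop :=
  T.clause = D ∧ T.wf rstep ∧ T.regular ∧ T.lemOK Γ ∧
  ∀ x ∈ T.resVars, (x, true) ∉ D ∧ (x, false) ∉ D

/-- regular tree-like resolution derivation of the clause `D` from `Γ`. -/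
def RegTreeDeriv {V : Type} [DecidableEq V] (Γ : Set (Clause V)) (D : Clause V)
    (T : PTree V) : Prop :=
  T.clause = D ∧ T.wf rstep ∧ T.regular ∧ T.leavesIn Γ ∧
  ∀ x ∈ T.resVars, (x, true) ∉ D ∧ (x, false) ∉ D

/-! ### Dag-like derivations -/

/-- A dag-like resolution derivation: a sequence of `len` clauses, each an
axiom (`just i = none`) or obtained by resolution from two earlier clauses. -/
structure DagDeriv (V : Type) [DecidableEq V] where
  len : ℕ
  cl : ℕ → Clause V
  just : ℕ → Option (ℕ × ℕ × V)

namespace DagDeriv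

variable {V : Type} [DecidableEq V]

/-- Validity relative to the initial clause set `Γ`. -/
def ok (D : DagDeriv V) (Γ : Set (Clause V)) : Prop :=
  ∀ i, i < D.len →
    match D.just i with
    | none => D.cl i ∈ Γ
    | some (a, b, x) => a < i ∧ b < i ∧ rstep x (D.cl a) (D.cl b) (D.cl i)

/-- `j` is a premise of `i`. -/
def prem (D : DagDeriv V) (i j : ℕ) : Prop :=
  ∃ a b x, D.just i = some (a, b, x) ∧ (j = a ∨ j = b)

/-- `j` lies in the subderivation of `i` (is reachable from `i` in the dag). -/
def reach (D : DagDeriv V) : ℕ → ℕ → Prop := Relation.ReflTransGen D.prem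

/-- `x` is the resolution variable of the inference at `i`. -/
def resAt (D : DagDeriv V) (i : ℕ) (x : V) : Prop := ∃ a b, D.just i = some (a, b, x)

/-- No variable is used as resolution variable twice along a path of the dag. -/
def regular (D : DagDeriv V) : Prop :=
  ∀ i a b x, D.just i = some (a, b, x) →
    ∀ j, (D.reach a j ∨ D.reach b j) → ¬ D.resAt j x

/-- The subderivation of `i` uses `x` as a resolution variable. -/
def usesVar (D : DagDeriv V) (i : ℕ) (x : V) : Prop := ∃ j, D.reach i j ∧ D.resAt j x

end DagDeriv

/-! ### Supports, bypassing, and the sets `B`, `B⁺`, `S_ℓ^B(C)` for a clause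
`C = ¬p_{i_1,j_1} ∨ … ∨ ¬p_{i_k,j_k}` given by `k` and the functions
`I J : ℕ → ℕ` (with `I ℓ = i_ℓ`, `J ℓ = j_ℓ` for `1 ≤ ℓ ≤ k`). -/

/-- Index `ℓ` is bypassed. -/
def bypassed (k : ℕ) (J : ℕ → ℕ) (ℓ : ℕ) : Prop :=
  ∃ ℓ', ℓ < ℓ' ∧ ℓ' ≤ k ∧ J ℓ' = J ℓ

/-- `ℓ'` is the max-bypasser of `ℓ`. -/
def maxByp (k : ℕ) (J : ℕ → ℕ) (ℓ ℓ' : ℕ) : Prop :=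
  ℓ < ℓ' ∧ ℓ' ≤ k ∧ J ℓ' = J ℓ ∧ ∀ a, ℓ < a → a ≤ k → J a = J ℓ → a ≤ ℓ'

/-- `i_{ℓ'}` directly supports `i_ℓ`. -/
def dsup (G : StoneDag) (k : ℕ) (I J : ℕ → ℕ) (ℓ' ℓ : ℕ) : Prop :=
  1 ≤ ℓ ∧ ℓ < ℓ' ∧ ℓ' ≤ k ∧
  (maxByp k J ℓ ℓ' ∨
    (¬ bypassed k J ℓ ∧ (I ℓ' = G.p1 (I ℓ) ∨ I ℓ' = G.p2 (I ℓ))))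

/-- `i_a` supports `i_b`: reflexive transitive closure of direct support. -/
def supp (G : StoneDag) (k : ℕ) (I J : ℕ → ℕ) : ℕ → ℕ → Prop :=
  Relation.ReflTransGen (dsup G k I J)

/-- `dom(C)` as a set of vertices. -/
def domv (k : ℕ) (I : ℕ → ℕ) : Set ℕ := { v | ∃ a, 1 ≤ a ∧ a ≤ k ∧ I a = v }

/-- `S_ℓ(C)`: the set of vertices of `dom(C)` supporting `i_ℓ`. -/
def suppSet (G : StoneDag) (k : ℕ) (I J : ℕ → ℕ) (ℓ : ℕ) : Set ℕ :=
  { v | ∃ a, 1 ≤ a ∧ a ≤ k ∧ I a = v ∧ supp G k I J a ℓ }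

/-- `i_ℓ ∈ B`: not bypassed and some predecessor outside `dom(C)`. -/
def Bidx (G : StoneDag) (k : ℕ) (I J : ℕ → ℕ) (ℓ : ℕ) : Prop :=
  1 ≤ ℓ ∧ ℓ ≤ k ∧ ¬ bypassed k J ℓ ∧
  (G.p1 (I ℓ) ∉ domv k I ∨ G.p2 (I ℓ) ∉ domv k I)

/-- `i_ℓ ∈ B₁`: exactly one predecessor outside `dom(C)`. -/
def B1idx (G : StoneDag) (k : ℕ) (I J : ℕ → ℕ) (ℓ : ℕ) : Prop :=
  Bidx G k I J ℓ ∧ (G.p1 (I ℓ) ∈ domv k I ∨ G.p2 (I ℓ) ∈ domv k I)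

/-- `i_ℓ ∈ B₂`: both predecessors outside `dom(C)`. -/
def B2idx (G : StoneDag) (k : ℕ) (I J : ℕ → ℕ) (ℓ : ℕ) : Prop :=
  1 ≤ ℓ ∧ ℓ ≤ k ∧ ¬ bypassed k J ℓ ∧
  G.p1 (I ℓ) ∉ domv k I ∧ G.p2 (I ℓ) ∉ domv k I

/-- `i_ℓ ∈ B⁺`: in `B`, or bypassed with max-bypasser in `B`. -/
def Bplus (G : StoneDag) (k : ℕ) (I J : ℕ → ℕ) (ℓ : ℕ) : Prop :=
  Bidx G k I J ℓ ∨ (1 ≤ ℓ ∧ ℓ ≤ k ∧ ∃ ℓ', maxByp k J ℓ ℓ' ∧ Bidx G k I J ℓ')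

/-- Membership in `S_ℓ^B(C)` (on indices). -/
inductive SBmem (G : StoneDag) (k : ℕ) (I J : ℕ → ℕ) (ℓ : ℕ) : ℕ → Prop where
  | base : SBmem G k I J ℓ ℓ
  | byp (a b : ℕ) : SBmem G k I J ℓ a → (a = ℓ ∨ ¬ Bidx G k I J a) →
      maxByp k J a b → ¬ Bidx G k I J b → SBmem G k I J ℓ b
  | pred (a b : ℕ) : SBmem G k I J ℓ a → (a = ℓ ∨ ¬ Bidx G k I J a) →
      ¬ bypassed k J a → 1 ≤ b → b ≤ k →
      (I b = G.p1 (I a) ∨ I b = G.p2 (I a)) → SBmem G k I J ℓ b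

/-- The clause `C_ℓ`. -/
noncomputable def Clc (G : StoneDag) (k : ℕ) (I J : ℕ → ℕ) (ℓ : ℕ) : Clause SV :=
  ((Finset.Icc 1 k).filter fun a =>
      SBmem G k I J ℓ a ∧ ¬(a = ℓ ∧ bypassed k J ℓ)).image
    fun a => ((SV.p (I a) (J a), false) : Lit SV)

/-- The clause `E_ℓ`. -/
noncomputable def Elc (G : StoneDag) (k : ℕ) (I J : ℕ → ℕ) (ℓ : ℕ) : Clause SV :=
  ((Finset.Icc 1 k).filter fun a =>
      SBmem G k I J ℓ a ∧ Bplus G k I J a ∧ (Bidx G k I J ℓ → a ≠ ℓ)).image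
    fun a => ((SV.r (J a), false) : Lit SV)

/-- `t_1,…,t_r` enumerates the indices of `B ∪ {1}` in decreasing order. -/
def EnumB (G : StoneDag) (k : ℕ) (I J : ℕ → ℕ) (r : ℕ) (t : ℕ → ℕ) : Prop :=
  (∀ q, 1 ≤ q → q ≤ r → (Bidx G k I J (t q) ∨ t q = 1)) ∧
  (∀ q q', 1 ≤ q → q < q' → q' ≤ r → t q' < t q) ∧
  (∀ ℓ, Bidx G k I J ℓ ∨ ℓ = 1 → ∃ q, 1 ≤ q ∧ q ≤ r ∧ t q = ℓ)

/-- The clause `F_q`. -/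
noncomputable def Fcl (G : StoneDag) (k : ℕ) (I J : ℕ → ℕ) (r : ℕ) (t : ℕ → ℕ)
    (q : ℕ) : Clause SV :=
  if q = r ∧ ¬ Bidx G k I J 1 then Elc G k I J 1
  else (Finset.Icc 1 (q - 1)).image fun q' => ((SV.r (J (t q')), false) : Lit SV)

/-- The standing hypotheses on the clause `C`: `k ≥ 1`, `1 = i_1 < … < i_k ≤ n`,
`j_ℓ ∈ {1,…,m}`, and every vertex of `dom(C)` supports vertex `1`. -/
def GoodC (G : StoneDag) (m k : ℕ) (I J : ℕ → ℕ) : Prop :=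
  1 ≤ k ∧ I 1 = 1 ∧ I k ≤ G.n ∧
  (∀ a b, 1 ≤ a → a < b → b ≤ k → I a < I b) ∧
  (∀ a, 1 ≤ a → a ≤ k → 1 ≤ J a ∧ J a ≤ m) ∧
  (∀ a, 1 ≤ a → a ≤ k → supp G k I J a 1)

/-!
Walk along direct supports from a root `s` up to a supporter `a` of `s`, and restart the walk at
every vertex of `B` that it meets. The last starting point `s'` is `s` itself or lies in `B`, and
the rest of the walk never continues past a vertex of `B`, so that `a ∈ S_{s'}^B(C)`. Conversely
`S_s^B(C) ⊆ S_s(C)`. Hence `⋃_{s ∈ T} S_s^B(C) = ⋃_{s ∈ T} S_s(C)` for every `T ⊇ B`. For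
`T = B ∪ {ρ}`, the only vertex whose literal can be missing from its own clause is `ρ`, since
vertices of `B` are not bypassed.
-/

/-- The literal `¬p_{i_a,j_a}` of the clause `C`. -/
abbrev negLit (I J : ℕ → ℕ) (a : ℕ) : Lit SV := (SV.p (I a) (J a), false)

section

variable {G : StoneDag} {m k : ℕ} {I J : ℕ → ℕ} {a b s ρ : ℕ}

theorem Bidx.mem_Icc (h : Bidx G k I J s) : s ∈ Set.Icc 1 k :=
  ⟨h.1, h.2.1⟩

theorem Bidx.not_bypassed (h : Bidx G k I J s) : ¬ bypassed k J s :=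
  h.2.2.1

theorem SBmem.of_dsup (hb : SBmem G k I J s b) (hcont : b = s ∨ ¬ Bidx G k I J b)
    (hab : dsup G k I J a b) (ha : ¬ Bidx G k I J a) : SBmem G k I J s a := by
  obtain ⟨hb1, hlt, hak, hbyp | ⟨hnb, hpred⟩⟩ := hab
  · exact .byp b a hb hcont hbyp ha
  · exact .pred b a hb hcont hnb (hb1.trans hlt.le) hak hpred

theorem exists_SBmem_of_supp (h : supp G k I J a s) :
    ∃ s', (Bidx G k I J s' ∨ s' = s) ∧ SBmem G k I J s' a := by
  induction h using Relation.ReflTransGen.head_induction_on with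
  | refl => exact ⟨s, .inr rfl, .base⟩
  | @head a b hab _ ih =>
    by_cases ha : Bidx G k I J a
    · exact ⟨a, .inl ha, .base⟩
    by_cases hb : Bidx G k I J b
    · exact ⟨b, .inl hb, SBmem.base.of_dsup (.inl rfl) hab ha⟩
    · obtain ⟨s', hs', hmem⟩ := ih
      exact ⟨s', hs', hmem.of_dsup (.inr hb) hab ha⟩

theorem SBmem.mem_Icc (h : SBmem G k I J s a) (hs : s ∈ Set.Icc 1 k) : a ∈ Set.Icc 1 k := by
  induction h with
  | base => exact hs
  | byp a b _ _ hbyp _ ih => exact ⟨ih.1.trans hbyp.1.le, hbyp.2.1⟩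
  | pred _ b _ _ _ hb1 hbk _ => exact ⟨hb1, hbk⟩

theorem dsup_of_pred (hI : StrictMonoOn I (Set.Icc 1 k))
    (hIn : Set.MapsTo I (Set.Icc 1 k) (Set.Icc 1 G.n)) (ha : a ∈ Set.Icc 1 k)
    (hb : b ∈ Set.Icc 1 k) (hnb : ¬ bypassed k J a)
    (hpred : I b = G.p1 (I a) ∨ I b = G.p2 (I a)) : dsup G k I J b a := by
  obtain ⟨hIa1, hIan⟩ := hIn ha
  have hIab : I a < I b := by
    rcases hpred with h | h
    · exact h ▸ G.p1_gt _ hIa1 hIan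
    · exact h ▸ G.p2_gt _ hIa1 hIan
  exact ⟨ha.1, (hI.lt_iff_lt ha hb).1 hIab, hb.2, .inr ⟨hnb, hpred⟩⟩

theorem SBmem.supp (h : SBmem G k I J s a) (hI : StrictMonoOn I (Set.Icc 1 k))
    (hIn : Set.MapsTo I (Set.Icc 1 k) (Set.Icc 1 G.n)) (hs : s ∈ Set.Icc 1 k) :
    supp G k I J a s := by
  induction h with
  | base => exact .refl
  | byp a b ha _ hbyp _ ih =>
    exact .head ⟨(ha.mem_Icc hs).1, hbyp.1, hbyp.2.1, .inl hbyp⟩ ih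
  | pred a b ha _ hnb hb1 hbk hpred ih =>
    exact .head (dsup_of_pred hI hIn (ha.mem_Icc hs) ⟨hb1, hbk⟩ hnb hpred) ih

theorem exists_mem_SBmem_iff_exists_mem_supp (hI : StrictMonoOn I (Set.Icc 1 k))
    (hIn : Set.MapsTo I (Set.Icc 1 k) (Set.Icc 1 G.n)) {T : Set ℕ}
    (hBT : ∀ s, Bidx G k I J s → s ∈ T) (hT : T ⊆ Set.Icc 1 k) :
    (∃ s ∈ T, SBmem G k I J s a) ↔ ∃ s ∈ T, supp G k I J a s := by
  constructor
  · rintro ⟨s, hs, hmem⟩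
    exact ⟨s, hs, hmem.supp hI hIn (hT hs)⟩
  · rintro ⟨s, hs, hsupp⟩
    obtain ⟨s', hs' | rfl, hmem⟩ := exists_SBmem_of_supp hsupp
    · exact ⟨s', hBT s' hs', hmem⟩
    · exact ⟨s', hs, hmem⟩

theorem insert_biUnion_Clc_eq_image {T : Finset ℕ}
    (hT : ∀ s, s ∈ T ↔ Bidx G k I J s ∨ s = ρ) (hρ : ρ ∈ Set.Icc 1 k) :
    insert (negLit I J ρ) (T.biUnion (Clc G k I J)) =
      ((Finset.Icc 1 k).filter fun a => ∃ s ∈ T, SBmem G k I J s a).image (negLit I J) := by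
  apply Finset.Subset.antisymm
  · refine Finset.insert_subset ?_ (Finset.biUnion_subset.2 fun s hs => ?_)
    · exact Finset.mem_image_of_mem _
        (Finset.mem_filter.2 ⟨Finset.mem_Icc.2 hρ, ρ, (hT ρ).2 (.inr rfl), .base⟩)
    · exact Finset.image_subset_image
        (Finset.monotone_filter_right _ fun _ _ ha => ⟨s, hs, ha.1⟩)
  · refine Finset.image_subset_iff.2 fun a ha => ?_
    obtain ⟨hak, s, hs, hmem⟩ := Finset.mem_filter.1 ha
    by_cases haρ : a = ρ
    · exact haρ ▸ Finset.mem_insert_self _ _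
    · have hself : ¬ (a = s ∧ bypassed k J s) := by
        rintro ⟨rfl, hbyp⟩
        exact ((hT a).1 hs).elim (fun hB => hB.not_bypassed hbyp) haρ
      exact Finset.mem_insert_of_mem <| Finset.mem_biUnion.2
        ⟨s, hs, Finset.mem_image_of_mem _ (Finset.mem_filter.2 ⟨hak, hmem, hself⟩)⟩

theorem SB_cover_general (hI : StrictMonoOn I (Set.Icc 1 k))
    (hIn : Set.MapsTo I (Set.Icc 1 k) (Set.Icc 1 G.n)) (hρ : ρ ∈ Set.Icc 1 k) {T : Finset ℕ}
    (hT : ∀ s, s ∈ T ↔ Bidx G k I J s ∨ s = ρ) :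
    (∀ a, (∃ s ∈ T, SBmem G k I J s a) ↔ ∃ s ∈ T, supp G k I J a s) ∧
    insert (negLit I J ρ) (T.biUnion (Clc G k I J)) =
      ((Finset.Icc 1 k).filter fun a => ∃ s ∈ T, supp G k I J a s).image (negLit I J) := by
  have hTk : (T : Set ℕ) ⊆ Set.Icc 1 k := fun s hs =>
    ((hT s).1 hs).elim Bidx.mem_Icc fun h => h ▸ hρ
  have hcover (a : ℕ) : (∃ s ∈ T, SBmem G k I J s a) ↔ ∃ s ∈ T, supp G k I J a s :=
    exists_mem_SBmem_iff_exists_mem_supp hI hIn (fun s hs => (hT s).2 (.inl hs)) hTk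
  refine ⟨hcover, ?_⟩
  simp only [insert_biUnion_Clc_eq_image hT hρ, hcover]

theorem GoodC.strictMonoOn (h : GoodC G m k I J) : StrictMonoOn I (Set.Icc 1 k) :=
  fun a ha b hb hab => h.2.2.2.1 a b ha.1 hab hb.2

theorem GoodC.mapsTo (h : GoodC G m k I J) :
    Set.MapsTo I (Set.Icc 1 k) (Set.Icc 1 G.n) := by
  have hmono := h.strictMonoOn.monotoneOn
  obtain ⟨hk, hI1, hIk, -⟩ := h
  exact fun a ha => ⟨hI1 ▸ hmono ⟨le_rfl, hk⟩ ha ha.1, (hmono ha ⟨hk, le_rfl⟩ ha.2).trans hIk⟩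

theorem GoodC.supp_one (h : GoodC G m k I J) (ha : a ∈ Set.Icc 1 k) : supp G k I J a 1 :=
  h.2.2.2.2.2 a ha.1 ha.2

theorem EnumB.mem_image_iff {r : ℕ} {t : ℕ → ℕ} (ht : EnumB G k I J r t) (s : ℕ) :
    s ∈ (Finset.Icc 1 r).image t ↔ Bidx G k I J s ∨ s = 1 := by
  simp only [Finset.mem_image, Finset.mem_Icc, and_assoc]
  constructor
  · rintro ⟨q, hq1, hqr, rfl⟩
    exact ht.1 q hq1 hqr
  · exact ht.2.2 s

end

/-- every `i_ℓ ≠ 1` in `dom(C)` belongs to some `S_{t_q}^B(C)`;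
consequently `C*_0 = {¬p_{1,j_1}} ∪ ⋃_{q≥1} C_{t_q}` equals `C`. -/
theorem SB_cover (G : StoneDag) (m k : ℕ) (I J : ℕ → ℕ)
    (h : GoodC G m k I J) (r : ℕ) (t : ℕ → ℕ) (ht : EnumB G k I J r t) :
    (∀ ℓ, 1 ≤ ℓ → ℓ ≤ k → I ℓ ≠ 1 →
        ∃ q, 1 ≤ q ∧ q ≤ r ∧ SBmem G k I J (t q) ℓ) ∧
    insert ((SV.p (I 1) (J 1), false) : Lit SV)
        ((Finset.Icc 1 r).biUnion fun q => Clc G k I J (t q)) =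
      (Finset.Icc 1 k).image fun a => ((SV.p (I a) (J a), false) : Lit SV) := by
  have hT := ht.mem_image_iff
  obtain ⟨hcover, hclause⟩ := SB_cover_general h.strictMonoOn h.mapsTo ⟨le_rfl, h.1⟩ hT
  have hsupp : ∀ a ∈ Finset.Icc 1 k, ∃ s ∈ (Finset.Icc 1 r).image t, supp G k I J a s :=
    fun a ha => ⟨1, (hT 1).2 (.inr rfl), h.supp_one (Finset.mem_Icc.1 ha)⟩
  constructor
  · intro ℓ h1 hk _
    simpa [and_assoc] using (hcover ℓ).2 (hsupp ℓ (Finset.mem_Icc.2 ⟨h1, hk⟩))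
  · rwa [Finset.image_biUnion, Finset.filter_true_of_mem hsupp] at hclause
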